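/- arXiv:2011.03653 — 2 statements merged into one kernel-verified Lean document; each statement's English description precedes it below -/
import Mathlib

section
/- For every r ∈ P, the set B(r) = {(p_1, p_2) ∈ P² : for i = 1,2, p_i maximizes p ↦ π_i(p, p_{−i}, r) over P} has a greatest element U(r) with respect to the componentwise order. Suppose that in each period t, prices are set as p_t = (p_{1,t}, p_{2,t}) = U(r_t) and reference prices update as r_{t+1} = a r_t + (1−a)(θ_1 p_{1,t} + θ_2 p_{2,t}). Then for any initial reference price r_1 ∈ P, each of the sequences (p_{1,t}), (p_{2,t}), (r_t) is monotone and converges, and the limit (p̃_1, p̃_2, r̃) is a Stable Nash Equilibrium (SNE). -/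
/-! Firm `i`'s revenue is a concave quadratic in its own price, so its unique best response is the
unconstrained optimum `(α + δ q + γ ρ) / (2 β)` projected to `[pl, pu]` (`isMax_iff_eq_clamp`). This
response is increasing in the rival price `q` and in the reference price `ρ`, and since `β ≥ 2 δ` it
has slope at most `1/4` in `q`. Hence if one equilibrium had a higher price than an equilibrium at a
larger reference price, the rival's gap would have to be four times as large, and vice versa, which
is absurd: equilibria are increasing in `ρ` (`equilibrium_mono`), in particular unique for given
`ρ`. They exist because the composition of the two responses is a continuous self-map of `[pl, pu]`.

Consequently `r t` stays in `[pl, pu]`, the comparison of `r 0` with `r 1` propagates to all times,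
and the prices inherit the monotonicity of `r`. Bounded monotone sequences converge, and the
best-response inequalities and the update rule pass to the limit by continuity. -/

/-- Projection of `s` to the price interval `[pl, pu]`. -/
noncomputable def clamp (pl pu s : ℝ) : ℝ := max pl (min pu s)

lemma clamp_mem {pl pu : ℝ} (h : pl ≤ pu) (s : ℝ) : clamp pl pu s ∈ Set.Icc pl pu :=
  ⟨le_max_left _ _, max_le h (min_le_left _ _)⟩

/-- The maximiser of a concave quadratic on an interval is its vertex projected to the interval. -/
lemma isMax_iff_eq_clamp {pl pu β c x : ℝ} (h : pl ≤ pu) (hβ : 0 < β) (hx : x ∈ Set.Icc pl pu) :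
    (∀ q ∈ Set.Icc pl pu, q * (c - β * q) ≤ x * (c - β * x)) ↔ x = clamp pl pu (c / (2 * β)) := by
  obtain ⟨s, rfl⟩ : ∃ s, c = s * (2 * β) := ⟨c / (2 * β), by field_simp⟩
  have hs : s * (2 * β) / (2 * β) = s := by field_simp
  rw [hs]
  -- Completing the square turns maximisation into minimisation of the distance to the vertex.
  have key : ∀ q, q * (s * (2 * β) - β * q) ≤ x * (s * (2 * β) - β * x) ↔
      (x - s) ^ 2 ≤ (q - s) ^ 2 := by
    intro q
    rw [← mul_le_mul_iff_right₀ hβ (b := (x - s) ^ 2)]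
    constructor <;> intro h <;> linarith
  simp only [key]
  obtain ⟨hx1, hx2⟩ := hx
  constructor
  · intro hmax
    have h1 := hmax _ (clamp_mem h s)
    unfold clamp at *
    rcases le_total pu s with h2 | h2
    · rw [min_eq_left h2, max_eq_right h] at *
      nlinarith
    · rw [min_eq_right h2] at *
      rcases le_total pl s with h3 | h3
      · rw [max_eq_right h3] at *
        nlinarith
      · rw [max_eq_left h3] at *
        nlinarith
  · rintro rfl q ⟨hq1, hq2⟩
    unfold clamp
    rcases le_total pu s with h2 | h2
    · rw [min_eq_left h2, max_eq_right h]
      nlinarith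
    · rw [min_eq_right h2]
      rcases le_total pl s with h3 | h3
      · rw [max_eq_right h3]
        nlinarith
      · rw [max_eq_left h3]
        nlinarith

/-- Projection to an interval is increasing and nonexpansive. -/
lemma clamp_sub_le (pl pu s s' : ℝ) :
    clamp pl pu s ≤ clamp pl pu s' ∨ clamp pl pu s - clamp pl pu s' ≤ s - s' := by
  unfold clamp
  grind

/-- A best response exceeds a best response at a higher reference price only if the rival's price
exceeds its counterpart by at least four times as much. -/
lemma response_le_or {pl pu α β δ γ x x' y y' ρ ρ' : ℝ} (hβ : 0 < β) (hδ : 0 < δ) (hγ : 0 < γ)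
    (hδβ : 2 * δ ≤ β) (hρ : ρ ≤ ρ')
    (hx : x = clamp pl pu ((α + δ * y + γ * ρ) / (2 * β)))
    (hx' : x' = clamp pl pu ((α + δ * y' + γ * ρ') / (2 * β))) :
    x ≤ x' ∨ 4 * (x - x') ≤ y - y' := by
  rcases clamp_sub_le pl pu ((α + δ * y + γ * ρ) / (2 * β)) ((α + δ * y' + γ * ρ') / (2 * β))
    with h | h
  · left
    rwa [hx, hx']
  · rw [← hx, ← hx', ← sub_div, le_div_iff₀ (by positivity)] at h
    rcases le_or_gt x x' with h1 | h1
    · exact Or.inl h1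
    · right
      have h2 : γ * ρ ≤ γ * ρ' := by gcongr
      have h3 : 2 * δ * (x - x') ≤ β * (x - x') :=
        mul_le_mul_of_nonneg_right hδβ (by linarith)
      have h4 : δ * (4 * (x - x')) ≤ δ * (y - y') := by linarith
      exact le_of_mul_le_mul_left h4 hδ

/-- Equilibrium prices are increasing in the reference price. -/
lemma equilibrium_mono {pl pu α₁ α₂ β₁ β₂ δ₁ δ₂ γ₁ γ₂ x x' y y' ρ ρ' : ℝ}
    (hβ₁ : 0 < β₁) (hδ₁ : 0 < δ₁) (hγ₁ : 0 < γ₁) (hδβ₁ : 2 * δ₁ ≤ β₁)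
    (hβ₂ : 0 < β₂) (hδ₂ : 0 < δ₂) (hγ₂ : 0 < γ₂) (hδβ₂ : 2 * δ₂ ≤ β₂) (hρ : ρ ≤ ρ')
    (hx : x = clamp pl pu ((α₁ + δ₁ * y + γ₁ * ρ) / (2 * β₁)))
    (hy : y = clamp pl pu ((α₂ + δ₂ * x + γ₂ * ρ) / (2 * β₂)))
    (hx' : x' = clamp pl pu ((α₁ + δ₁ * y' + γ₁ * ρ') / (2 * β₁)))
    (hy' : y' = clamp pl pu ((α₂ + δ₂ * x' + γ₂ * ρ') / (2 * β₂))) :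
    x ≤ x' ∧ y ≤ y' := by
  have h1 := response_le_or hβ₁ hδ₁ hγ₁ hδβ₁ hρ hx hx'
  have h2 := response_le_or hβ₂ hδ₂ hγ₂ hδβ₂ hρ hy hy'
  grind

lemma exists_equilibrium {pl pu : ℝ} (h : pl ≤ pu) (α₁ α₂ β₁ β₂ δ₁ δ₂ γ₁ γ₂ ρ : ℝ) :
    ∃ x y, x = clamp pl pu ((α₁ + δ₁ * y + γ₁ * ρ) / (2 * β₁)) ∧
      y = clamp pl pu ((α₂ + δ₂ * x + γ₂ * ρ) / (2 * β₂)) := by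
  let f : ℝ → ℝ := fun x => clamp pl pu
    ((α₁ + δ₁ * clamp pl pu ((α₂ + δ₂ * x + γ₂ * ρ) / (2 * β₂)) + γ₁ * ρ) / (2 * β₁))
  have hf : Continuous f := by
    unfold f clamp
    fun_prop
  obtain ⟨x, -, hx⟩ := exists_mem_Icc_isFixedPt_of_mapsTo hf.continuousOn h
    (fun x _ => clamp_mem h _)
  exact ⟨x, _, hx.symm, rfl⟩

lemma exists_tendsto_of_bounded {u : ℕ → ℝ} {b c : ℝ} (hu : Monotone u ∨ Antitone u)
    (hb : ∀ t, u t ∈ Set.Icc b c) :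
    ∃ L ∈ Set.Icc b c, Filter.Tendsto u Filter.atTop (nhds L) := by
  obtain ⟨L, hL⟩ : ∃ L, Filter.Tendsto u Filter.atTop (nhds L) := by
    rcases hu with hu | hu
    · exact ⟨_, tendsto_atTop_ciSup hu ⟨c, by rintro _ ⟨t, rfl⟩; exact (hb t).2⟩⟩
    · exact ⟨_, tendsto_atTop_ciInf hu ⟨b, by rintro _ ⟨t, rfl⟩; exact (hb t).1⟩⟩
  exact ⟨L, isClosed_Icc.mem_of_tendsto hL (Filter.Eventually.of_forall hb), hL⟩

/-- For every `r ∈ P`, the best-response set `B(r)` has a greatest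
element `U(r)` (componentwise). If in each period prices are set to the greatest
best-response profile w.r.t. the current reference price, and reference prices
update as a memory-based average, then prices and reference prices are monotone,
converge, and the limit is a Stable Nash Equilibrium. -/
theorem stmt_1
    (pl pu : ℝ) (hpl : 0 < pl) (hlu : pl < pu)
    (α₁ α₂ β₁ β₂ δ₁ δ₂ γ₁ γ₂ m a θ₁ θ₂ : ℝ)
    (hα₁ : 0 < α₁) (hα₂ : 0 < α₂) (hδ₁ : 0 < δ₁) (hδ₂ : 0 < δ₂)
    (hγ₁ : 0 < γ₁) (hγ₂ : 0 < γ₂) (hm : 2 ≤ m)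
    (hβ₁ : m * (δ₁ + γ₁) ≤ β₁) (hβ₂ : m * (δ₂ + γ₂) ≤ β₂)
    (ha : a ∈ Set.Ioo (0 : ℝ) 1) (hθ₁ : θ₁ ∈ Set.Ioo (0 : ℝ) 1)
    (hθ₂ : θ₂ ∈ Set.Ioo (0 : ℝ) 1) (hθ : θ₁ + θ₂ = 1)
    (π₁ π₂ : ℝ → ℝ → ℝ → ℝ)
    (hπ₁ : ∀ p q ρ, π₁ p q ρ = p * (α₁ - β₁ * p + δ₁ * q + γ₁ * ρ))
    (hπ₂ : ∀ p q ρ, π₂ p q ρ = q * (α₂ - β₂ * q + δ₂ * p + γ₂ * ρ))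
    (B : ℝ → Set (ℝ × ℝ))
    (hB : ∀ ρ, B ρ = {p : ℝ × ℝ | p.1 ∈ Set.Icc pl pu ∧ p.2 ∈ Set.Icc pl pu ∧
      (∀ q ∈ Set.Icc pl pu, π₁ q p.2 ρ ≤ π₁ p.1 p.2 ρ) ∧
      (∀ q ∈ Set.Icc pl pu, π₂ p.1 q ρ ≤ π₂ p.1 p.2 ρ)})
    -- the dynamics: prices are the greatest best-response profile
    (p₁ p₂ r : ℕ → ℝ)
    (hr0 : r 0 ∈ Set.Icc pl pu)
    (hgreatest : ∀ t, (p₁ t, p₂ t) ∈ B (r t) ∧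
      ∀ q ∈ B (r t), q.1 ≤ p₁ t ∧ q.2 ≤ p₂ t)
    (hrupd : ∀ t, r (t + 1) = a * r t + (1 - a) * (θ₁ * p₁ t + θ₂ * p₂ t)) :
    -- (i) every B(ρ) with ρ ∈ P has a greatest element
    (∀ ρ ∈ Set.Icc pl pu, ∃ u ∈ B ρ, ∀ q ∈ B ρ, q.1 ≤ u.1 ∧ q.2 ≤ u.2) ∧
    -- (ii) the sequences are monotone
    (Monotone p₁ ∨ Antitone p₁) ∧ (Monotone p₂ ∨ Antitone p₂) ∧
    (Monotone r ∨ Antitone r) ∧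
    -- (iii) they converge, and the limit is a Stable Nash Equilibrium
    (∃ L₁ L₂ L₃ : ℝ,
      Filter.Tendsto p₁ Filter.atTop (nhds L₁) ∧
      Filter.Tendsto p₂ Filter.atTop (nhds L₂) ∧
      Filter.Tendsto r Filter.atTop (nhds L₃) ∧
      L₁ ∈ Set.Icc pl pu ∧ L₂ ∈ Set.Icc pl pu ∧ L₃ ∈ Set.Icc pl pu ∧
      (∀ p ∈ Set.Icc pl pu, π₁ p L₂ L₃ ≤ π₁ L₁ L₂ L₃) ∧
      (∀ p ∈ Set.Icc pl pu, π₂ L₁ p L₃ ≤ π₂ L₁ L₂ L₃) ∧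
      L₃ = θ₁ * L₁ + θ₂ * L₂) := by
  obtain ⟨ha0, ha1⟩ := ha
  obtain ⟨hθ₁0, -⟩ := hθ₁
  obtain ⟨hθ₂0, -⟩ := hθ₂
  have hle : pl ≤ pu := hlu.le
  have hm₁ : 2 * (δ₁ + γ₁) ≤ m * (δ₁ + γ₁) := by gcongr
  have hm₂ : 2 * (δ₂ + γ₂) ≤ m * (δ₂ + γ₂) := by gcongr
  have hβ₁0 : 0 < β₁ := by linarith
  have hβ₂0 : 0 < β₂ := by linarith
  have hδβ₁ : 2 * δ₁ ≤ β₁ := by linarith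
  have hδβ₂ : 2 * δ₂ ≤ β₂ := by linarith
  have hB' : ∀ ρ x y, (x, y) ∈ B ρ ↔ x = clamp pl pu ((α₁ + δ₁ * y + γ₁ * ρ) / (2 * β₁)) ∧
      y = clamp pl pu ((α₂ + δ₂ * x + γ₂ * ρ) / (2 * β₂)) := by
    intro ρ x y
    have e₁ : ∀ q, π₁ q y ρ = q * ((α₁ + δ₁ * y + γ₁ * ρ) - β₁ * q) := fun q => by
      rw [hπ₁]; ring
    have e₂ : ∀ q, π₂ x q ρ = q * ((α₂ + δ₂ * x + γ₂ * ρ) - β₂ * q) := fun q => by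
      rw [hπ₂]; ring
    simp only [hB, Set.mem_ofPred_eq, e₁, e₂]
    constructor
    · rintro ⟨hx, hy, h1, h2⟩
      exact ⟨(isMax_iff_eq_clamp hle hβ₁0 hx).1 h1, (isMax_iff_eq_clamp hle hβ₂0 hy).1 h2⟩
    · rintro ⟨h1, h2⟩
      have hx : x ∈ Set.Icc pl pu := by rw [h1]; exact clamp_mem hle _
      have hy : y ∈ Set.Icc pl pu := by rw [h2]; exact clamp_mem hle _
      exact ⟨hx, hy, (isMax_iff_eq_clamp hle hβ₁0 hx).2 h1, (isMax_iff_eq_clamp hle hβ₂0 hy).2 h2⟩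
  have hmono : ∀ ρ ρ' x y x' y', ρ ≤ ρ' → (x, y) ∈ B ρ → (x', y') ∈ B ρ' → x ≤ x' ∧ y ≤ y' := by
    intro ρ ρ' x y x' y' hρ h h'
    rw [hB'] at h h'
    exact equilibrium_mono hβ₁0 hδ₁ hγ₁ hδβ₁ hβ₂0 hδ₂ hγ₂ hδβ₂ hρ h.1 h.2 h'.1 h'.2
  have hmem : ∀ t, (p₁ t, p₂ t) ∈ B (r t) := fun t => (hgreatest t).1
  have hNE : ∀ t, p₁ t ∈ Set.Icc pl pu ∧ p₂ t ∈ Set.Icc pl pu ∧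
      (∀ q ∈ Set.Icc pl pu, π₁ q (p₂ t) (r t) ≤ π₁ (p₁ t) (p₂ t) (r t)) ∧
      (∀ q ∈ Set.Icc pl pu, π₂ (p₁ t) q (r t) ≤ π₂ (p₁ t) (p₂ t) (r t)) := by
    intro t
    simpa only [hB, Set.mem_ofPred_eq] using hmem t
  have hr : ∀ t, r t ∈ Set.Icc pl pu := by
    intro t
    induction t with
    | zero => exact hr0
    | succ t ih =>
      rw [hrupd]
      exact convex_Icc pl pu ih
        (convex_Icc pl pu (hNE t).1 (hNE t).2.1 hθ₁0.le hθ₂0.le hθ) ha0.le (by linarith) (by ring)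
  -- One step of the dynamics preserves the order of reference prices.
  have hstep : ∀ s t, r s ≤ r t → r (s + 1) ≤ r (t + 1) := by
    intro s t hst
    obtain ⟨h1, h2⟩ := hmono _ _ _ _ _ _ hst (hmem s) (hmem t)
    have ha' : 0 ≤ 1 - a := by linarith
    rw [hrupd, hrupd]
    gcongr
  have hrm : Monotone r ∨ Antitone r := by
    rcases le_total (r 0) (r 1) with h | h
    · left
      refine monotone_nat_of_le_succ fun t => ?_
      induction t with
      | zero => exact h
      | succ t ih => exact hstep _ _ ih
    · right
      refine antitone_nat_of_succ_le fun t => ?_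
      induction t with
      | zero => exact h
      | succ t ih => exact hstep _ _ ih
  have hpm₁ : Monotone p₁ ∨ Antitone p₁ := hrm.imp
    (fun h s t hst => (hmono _ _ _ _ _ _ (h hst) (hmem s) (hmem t)).1)
    (fun h s t hst => (hmono _ _ _ _ _ _ (h hst) (hmem t) (hmem s)).1)
  have hpm₂ : Monotone p₂ ∨ Antitone p₂ := hrm.imp
    (fun h s t hst => (hmono _ _ _ _ _ _ (h hst) (hmem s) (hmem t)).2)
    (fun h s t hst => (hmono _ _ _ _ _ _ (h hst) (hmem t) (hmem s)).2)
  refine ⟨?_, hpm₁, hpm₂, hrm, ?_⟩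
  · intro ρ _
    obtain ⟨x, y, hxy⟩ := exists_equilibrium hle α₁ α₂ β₁ β₂ δ₁ δ₂ γ₁ γ₂ ρ
    have hxy' := (hB' ρ x y).2 hxy
    exact ⟨(x, y), hxy', fun q hq => hmono ρ ρ _ _ _ _ le_rfl hq hxy'⟩
  · obtain ⟨L₁, hL₁, t₁⟩ := exists_tendsto_of_bounded hpm₁ fun t => (hNE t).1
    obtain ⟨L₂, hL₂, t₂⟩ := exists_tendsto_of_bounded hpm₂ fun t => (hNE t).2.1
    obtain ⟨L₃, hL₃, t₃⟩ := exists_tendsto_of_bounded hrm hr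
    refine ⟨L₁, L₂, L₃, t₁, t₂, t₃, hL₁, hL₂, hL₃, fun q hq => ?_, fun q hq => ?_, ?_⟩
    · refine le_of_tendsto_of_tendsto' (b := Filter.atTop) ?_ ?_ fun t => (hNE t).2.2.1 q hq
      · simp only [hπ₁]
        exact ((((t₂.const_mul δ₁).const_add _).add (t₃.const_mul γ₁)).const_mul q)
      · simp only [hπ₁]
        exact t₁.mul ((((t₁.const_mul β₁).const_sub α₁).add (t₂.const_mul δ₁)).add
          (t₃.const_mul γ₁))
    · refine le_of_tendsto_of_tendsto' (b := Filter.atTop) ?_ ?_ fun t => (hNE t).2.2.2 q hq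
      · simp only [hπ₂]
        exact ((((t₁.const_mul δ₂).const_add _).add (t₃.const_mul γ₂)).const_mul q)
      · simp only [hπ₂]
        exact t₂.mul ((((t₂.const_mul β₂).const_sub α₂).add (t₁.const_mul δ₂)).add
          (t₃.const_mul γ₂))
    · have hlim : Filter.Tendsto (fun t => r (t + 1)) Filter.atTop
          (nhds (a * L₃ + (1 - a) * (θ₁ * L₁ + θ₂ * L₂))) := by
        simp only [hrupd]
        exact (t₃.const_mul a).add (((t₁.const_mul θ₁).add (t₂.const_mul θ₂)).const_mul (1 - a))
      have heq := tendsto_nhds_unique ((Filter.tendsto_add_atTop_iff_nat 1).2 t₃) hlim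
      have ha' : 0 < 1 - a := by linarith
      exact mul_left_cancel₀ ha'.ne' (by linarith)
end

section
/- Assume there exists a Stable Nash Equilibrium (p_1*, p_2*, r*) in the open cube (p̲, p̄)³. For strong-convexity parameters σ_1, σ_2 > 0 and sensitivity margin m ≥ 2, define f_{i,m}(z) = (4σ_i + 2σ_{−i}/m²)z² − ((2 − 1/(2m))σ_i − σ_{−i}/(2m))z + 3/4 for i = 1,2, f_{n,m}(z) = (2/m²)(σ_1 + σ_2)z² + (1/(2m))(σ_1 + σ_2)z − 1/4, and S_{i,m} = {z > 0 : f_{i,m}(z) < 0} for i ∈ {1, 2, n}. If S_{1,m} ∩ S_{2,m} ∩ S_{n,m} ≠ ∅, then for any s in this intersection, running the OMD dynamics with σ_i-strongly convex, continuously differentiable regularizers R_i and constant step sizes ε_{i,t} = s·σ_i·(1−a)/β_i for i = 1,2 guarantees that (p_{1,t}, p_{2,t}, r_t) converges to the unique interior SNE (p_1*, p_2*, r*). -/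
/-!
The proof is a Lyapunov argument. Write `D R R' x y` for the Bregman divergence of the regularizer
`R`, and `x₁, x₂, ρ` for the deviations of `p₁, p₂, r` from the equilibrium. The potential is
`V = D R₁ (p₁s, p₁) + D R₂ (p₂s, p₂) + ρ² / 2`.

* The projection does not increase the divergence to a point of the price interval
  (`bregman_proj_le`), so one mirror step of size `ε` along `g` changes the divergence by at most
  `-ε g x + (ε g)² / (2σ)` (`bregman_step`).
* The equilibrium is interior, so the first-order conditions hold there and `g` is linear in the
  deviations. With `k = 1 / m ≥ (δ + γ) / β`, Young's inequality turns the bound into a quadratic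
  form without cross terms (`firm_step`).
* By convexity of the square, `ρ²` changes by at most `(1 - a) (θ₁ x₁² + θ₂ x₂² - ρ²)`.

In the sum, the coefficients of `x₁²`, `x₂²`, `ρ²` are at most `1 - a` times
`f₁(s) - 1/4`, `f₂(s) - 1/4`, `fₙ(s) - 1/4`, all three below `-1/4`. Hence `V ≥ 0` drops by at
least `(1 - a) / 4 * (x₁² + x₂² + ρ²)` at every step, the squared deviations are summable, and they
tend to `0` (`tendsto_zero_of_drop`).
-/

/-- The Bregman divergence `D_R(x, y) = R x - R y - R' y * (x - y)`. The function `R'` is a separate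
argument, standing for the derivative of `R`. -/
def bregman (R R' : ℝ → ℝ) (x y : ℝ) : ℝ := R x - R y - R' y * (x - y)

lemma bregman_lower {R R' : ℝ → ℝ} {σ : ℝ}
    (hsc : ∀ x y : ℝ, R y + R' y * (x - y) + σ / 2 * (x - y) ^ 2 ≤ R x) (x y : ℝ) :
    σ / 2 * (x - y) ^ 2 ≤ bregman R R' x y := by
  unfold bregman
  linarith [hsc x y]

lemma bregman_nonneg {R R' : ℝ → ℝ} {σ : ℝ} (hσ : 0 < σ)
    (hsc : ∀ x y : ℝ, R y + R' y * (x - y) + σ / 2 * (x - y) ^ 2 ≤ R x) (x y : ℝ) :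
    0 ≤ bregman R R' x y :=
  le_trans (by positivity) (bregman_lower hsc x y)

lemma bregman_three_point (R R' : ℝ → ℝ) (u q y : ℝ) :
    bregman R R' u y = bregman R R' u q + bregman R R' q y + (R' q - R' y) * (u - q) := by
  unfold bregman
  ring

lemma deriv_mono_of_strong {R R' : ℝ → ℝ} {σ : ℝ} (hσ : 0 < σ)
    (hsc : ∀ x y : ℝ, R y + R' y * (x - y) + σ / 2 * (x - y) ^ 2 ≤ R x) : Monotone R' := by
  intro x y hxy
  rcases hxy.eq_or_lt with rfl | hlt
  · exact le_rfl
  · have h1 := bregman_nonneg hσ hsc x y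
    have h2 := bregman_nonneg hσ hsc y x
    unfold bregman at h1 h2
    by_contra! hc
    nlinarith [mul_pos (sub_pos.2 hlt) (sub_pos.2 hc)]

/-- The projection onto `[l, u]` does not increase the divergence to a point of `[l, u]`. -/
lemma bregman_proj_le {R R' : ℝ → ℝ} {σ : ℝ} (hσ : 0 < σ)
    (hsc : ∀ x y : ℝ, R y + R' y * (x - y) + σ / 2 * (x - y) ^ 2 ≤ R x)
    {l u ps y : ℝ} (hps : ps ∈ Set.Icc l u) :
    bregman R R' ps (min (max y l) u) ≤ bregman R R' ps y := by
  obtain ⟨h1, h2⟩ := hps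
  have hmono := deriv_mono_of_strong hσ hsc
  rw [bregman_three_point R R' ps (min (max y l) u) y]
  have hnn := bregman_nonneg hσ hsc (min (max y l) u) y
  suffices 0 ≤ (R' (min (max y l) u) - R' y) * (ps - min (max y l) u) by linarith
  rcases le_total y l with hy | hy
  · rw [max_eq_right hy, min_eq_left (h1.trans h2)]
    exact mul_nonneg (sub_nonneg.2 (hmono hy)) (sub_nonneg.2 h1)
  · rw [max_eq_left hy]
    rcases le_total y u with hy' | hy'
    · rw [min_eq_left hy']
      simp
    · rw [min_eq_right hy']
      exact mul_nonneg_of_nonpos_of_nonpos (sub_nonpos.2 (hmono hy')) (sub_nonpos.2 h2)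

/-- The effect of one projected mirror step, with displacement `e` in the dual variable, on the
divergence to a point of the interval. -/
lemma bregman_step {R R' : ℝ → ℝ} {σ : ℝ} (hσ : 0 < σ)
    (hsc : ∀ x y : ℝ, R y + R' y * (x - y) + σ / 2 * (x - y) ^ 2 ≤ R x)
    {l u ps y p e : ℝ} (hps : ps ∈ Set.Icc l u) (hy : R' y = R' p - e) :
    bregman R R' ps (min (max y l) u) ≤
      bregman R R' ps p - e * (p - ps) + e ^ 2 / (2 * σ) := by
  refine (bregman_proj_le hσ hsc hps).trans ?_
  rw [bregman_three_point R R' ps p y, hy]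
  -- `D(p, y) + D(y, p) = e * (p - y)`, and `D(y, p)` is at least `σ / 2 * (y - p) ^ 2`.
  have h1 : bregman R R' p y = e * (p - y) - bregman R R' y p := by
    unfold bregman
    rw [hy]
    ring
  have h2 := bregman_lower hsc y p
  have h3 : e ^ 2 / (2 * σ) - e * (p - y) + σ / 2 * (y - p) ^ 2
      = (e - σ * (p - y)) ^ 2 / (2 * σ) := by
    field_simp
    ring
  have h4 : 0 ≤ (e - σ * (p - y)) ^ 2 / (2 * σ) := by positivity
  linarith

/-- The first-order condition for an interior best response. -/
lemma foc {l u ps β c : ℝ} (hps : ps ∈ Set.Ioo l u)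
    (hBR : ∀ p ∈ Set.Icc l u, p * (c - β * p) ≤ ps * (c - β * ps)) : c = 2 * β * ps := by
  have hmax : IsLocalMax (fun p : ℝ => p * (c - β * p)) ps := by
    filter_upwards [Icc_mem_nhds hps.1 hps.2] with p hp using hBR p hp
  have hd : HasDerivAt (fun p : ℝ => p * (c - β * p)) (1 * (c - β * ps) + ps * (-(β * 1))) ps :=
    (hasDerivAt_id ps).mul (((hasDerivAt_id ps).const_mul β).const_sub c)
  have := hmax.hasDerivAt_eq_zero hd
  linarith

/-- Decoupling by Young's inequality: `G = 2x - d w - g ρ` is the normalized gradient in terms of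
the own deviation `x`, the rival's deviation `w` and the reference deviation `ρ`. -/
lemma young_bound {d g k s b x w ρ : ℝ} (hd : 0 ≤ d) (hg : 0 ≤ g) (hdg : d + g ≤ k)
    (hs : 0 < s) (hb : b ≤ 1) :
    -(s * (2 * x - d * w - g * ρ) * x) + s ^ 2 * b * (2 * x - d * w - g * ρ) ^ 2 / 2 ≤
      (4 * s ^ 2 - (2 - k / 2) * s) * x ^ 2 + (2 * k ^ 2 * s ^ 2 + k / 2 * s) * w ^ 2
        + (2 * k ^ 2 * s ^ 2 + k / 2 * s) * ρ ^ 2 := by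
  have hdk : d ≤ k := by linarith
  have hgk : g ≤ k := by linarith
  have hlin : -((2 * x - d * w - g * ρ) * x) ≤
      -(2 - k / 2) * x ^ 2 + k / 2 * w ^ 2 + k / 2 * ρ ^ 2 := by
    have e1 : 0 ≤ d / 2 * (x - w) ^ 2 := by positivity
    have e2 : 0 ≤ g / 2 * (x - ρ) ^ 2 := by positivity
    have e3 := mul_le_mul_of_nonneg_right hdg (sq_nonneg x)
    have e4 := mul_le_mul_of_nonneg_right hdk (sq_nonneg w)
    have e5 := mul_le_mul_of_nonneg_right hgk (sq_nonneg ρ)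
    nlinarith
  have hquad : (2 * x - d * w - g * ρ) ^ 2 ≤
      8 * x ^ 2 + 4 * k ^ 2 * w ^ 2 + 4 * k ^ 2 * ρ ^ 2 := by
    have e1 := mul_le_mul_of_nonneg_right (pow_le_pow_left₀ hd hdk 2) (sq_nonneg w)
    have e2 := mul_le_mul_of_nonneg_right (pow_le_pow_left₀ hg hgk 2) (sq_nonneg ρ)
    nlinarith [sq_nonneg (2 * x + d * w + g * ρ), sq_nonneg (d * w - g * ρ)]
  have h1 := mul_le_mul_of_nonneg_left hlin hs.le
  have h2 : s ^ 2 * b * (2 * x - d * w - g * ρ) ^ 2 ≤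
      s ^ 2 * (8 * x ^ 2 + 4 * k ^ 2 * w ^ 2 + 4 * k ^ 2 * ρ ^ 2) :=
    mul_le_mul (mul_le_of_le_one_right (sq_nonneg s) hb) hquad (sq_nonneg _) (sq_nonneg s)
  linarith

/-- The change of one firm's divergence to its equilibrium price `ps`, where `qs` and `rs` are the
rival's price and the reference price at equilibrium. -/
lemma firm_step {R R' : ℝ → ℝ} {σ : ℝ} (hσ : 0 < σ)
    (hsc : ∀ x y : ℝ, R y + R' y * (x - y) + σ / 2 * (x - y) ^ 2 ≤ R x)
    {l u α β δ γ m a s ps qs rs y p q r : ℝ} (hδ : 0 < δ) (hγ : 0 < γ) (hm : 2 ≤ m)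
    (hβ : m * (δ + γ) ≤ β) (ha : a ∈ Set.Ioo (0 : ℝ) 1) (hs : 0 < s)
    (hps : ps ∈ Set.Ioo l u)
    (hBR : ∀ p ∈ Set.Icc l u,
      p * (α - β * p + δ * qs + γ * rs) ≤ ps * (α - β * ps + δ * qs + γ * rs))
    (hy : R' y = R' p - (s * σ * (1 - a) / β) * (2 * β * p - (α + δ * q + γ * r))) :
    bregman R R' ps (min (max y l) u) ≤ bregman R R' ps p + (1 - a) * (σ *
      ((4 * s ^ 2 - (2 - 1 / m / 2) * s) * (p - ps) ^ 2
        + (2 * (1 / m) ^ 2 * s ^ 2 + 1 / m / 2 * s) * (q - qs) ^ 2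
        + (2 * (1 / m) ^ 2 * s ^ 2 + 1 / m / 2 * s) * (r - rs) ^ 2)) := by
  obtain ⟨ha0, ha1⟩ := ha
  have hm0 : 0 < m := by linarith
  have hβ0 : 0 < β := lt_of_lt_of_le (by positivity) hβ
  have hfoc : α + δ * qs + γ * rs = 2 * β * ps :=
    foc hps fun p hp => by
      have h := hBR p hp
      rw [show α + δ * qs + γ * rs - β * p = α - β * p + δ * qs + γ * rs by ring,
        show α + δ * qs + γ * rs - β * ps = α - β * ps + δ * qs + γ * rs by ring]
      exact h
  have hdg : δ / β + γ / β ≤ 1 / m := by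
    rw [← add_div, div_le_div_iff₀ hβ0 hm0]
    linarith
  have hy' : R' y = R' p - s * σ * (1 - a) *
      (2 * (p - ps) - δ / β * (q - qs) - γ / β * (r - rs)) := by
    have hα : α = 2 * β * ps - δ * qs - γ * rs := by linarith
    rw [hy, hα]
    field_simp
    ring
  have hstep := bregman_step hσ hsc (Set.Ioo_subset_Icc_self hps) hy'
  have hyoung := young_bound (x := p - ps) (w := q - qs) (ρ := r - rs) (b := 1 - a)
    (div_nonneg hδ.le hβ0.le) (div_nonneg hγ.le hβ0.le) hdg hs (by linarith)
  have hmul := mul_le_mul_of_nonneg_left hyoung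
    (mul_nonneg (sub_nonneg.2 ha1.le) hσ.le)
  set G := 2 * (p - ps) - δ / β * (q - qs) - γ / β * (r - rs)
  have he : (s * σ * (1 - a) * G) ^ 2 / (2 * σ)
      = (1 - a) * σ * (s ^ 2 * (1 - a) * G ^ 2 / 2) := by
    field_simp
  rw [he] at hstep
  linarith

/-- If a nonnegative potential drops by at least a fixed multiple of `E ≥ 0` at every step, then `E`
is summable and so tends to `0`. -/
lemma tendsto_zero_of_drop {V E : ℕ → ℝ} {κ : ℝ} (hκ : 0 < κ) (hV : ∀ t, 0 ≤ V t)
    (hE : ∀ t, 0 ≤ E t) (h : ∀ t, V (t + 1) ≤ V t - κ * E t) :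
    Filter.Tendsto E Filter.atTop (nhds 0) := by
  have hsum : ∀ n, κ * ∑ t ∈ Finset.range n, E t ≤ V 0 - V n := by
    intro n
    induction n with
    | zero => simp
    | succ n ih =>
      rw [Finset.sum_range_succ, mul_add]
      linarith [h n]
  refine (summable_of_sum_range_le (c := V 0 / κ) hE fun n => ?_).tendsto_atTop_zero
  rw [le_div_iff₀ hκ]
  linarith [hsum n, hV n]

lemma tendsto_of_sq_le {u E : ℕ → ℝ} {c : ℝ} (hE : Filter.Tendsto E Filter.atTop (nhds 0))
    (h : ∀ t, (u t - c) ^ 2 ≤ E t) : Filter.Tendsto u Filter.atTop (nhds c) := by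
  have h1 : Filter.Tendsto (fun t => (u t - c) ^ 2) Filter.atTop (nhds 0) :=
    squeeze_zero (fun t => sq_nonneg _) h hE
  have h2 : Filter.Tendsto (fun t => |u t - c|) Filter.atTop (nhds 0) := by
    simpa [Real.sqrt_sq_eq_abs] using h1.sqrt
  exact tendsto_sub_nhds_zero_iff.1 ((tendsto_zero_iff_abs_tendsto_zero _).2 h2)


/-- Sufficient conditions for convergence under constant step
sizes. If `s > 0` satisfies `f_{1,m}(s) < 0`, `f_{2,m}(s) < 0` and
`f_{n,m}(s) < 0`, then OMD with constant step sizes `εᵢₜ = s·σᵢ·(1−a)/βᵢ`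
converges to the unique interior SNE. -/
theorem stmt_10
    (pl pu : ℝ) (hpl : 0 < pl) (hlu : pl < pu)
    (α₁ α₂ β₁ β₂ δ₁ δ₂ γ₁ γ₂ m a θ₁ θ₂ σ₁ σ₂ : ℝ)
    (hα₁ : 0 < α₁) (hα₂ : 0 < α₂) (hδ₁ : 0 < δ₁) (hδ₂ : 0 < δ₂)
    (hγ₁ : 0 < γ₁) (hγ₂ : 0 < γ₂) (hm : 2 ≤ m)
    (hβ₁ : m * (δ₁ + γ₁) ≤ β₁) (hβ₂ : m * (δ₂ + γ₂) ≤ β₂)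
    (ha : a ∈ Set.Ioo (0 : ℝ) 1) (hθ₁ : θ₁ ∈ Set.Ioo (0 : ℝ) 1)
    (hθ₂ : θ₂ ∈ Set.Ioo (0 : ℝ) 1) (hθ : θ₁ + θ₂ = 1)
    -- existence of an interior Stable Nash Equilibrium
    (p₁s p₂s rs : ℝ)
    (hp₁s : p₁s ∈ Set.Ioo pl pu) (hp₂s : p₂s ∈ Set.Ioo pl pu) (hrs : rs ∈ Set.Ioo pl pu)
    (hBR₁ : ∀ p ∈ Set.Icc pl pu,
      p * (α₁ - β₁ * p + δ₁ * p₂s + γ₁ * rs) ≤ p₁s * (α₁ - β₁ * p₁s + δ₁ * p₂s + γ₁ * rs))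
    (hBR₂ : ∀ p ∈ Set.Icc pl pu,
      p * (α₂ - β₂ * p + δ₂ * p₁s + γ₂ * rs) ≤ p₂s * (α₂ - β₂ * p₂s + δ₂ * p₁s + γ₂ * rs))
    (hstab : rs = θ₁ * p₁s + θ₂ * p₂s)
    -- regularizers: continuously differentiable and strongly convex
    (R₁ R₂ R₁' R₂' : ℝ → ℝ)
    (hR₁d : ∀ x, HasDerivAt R₁ (R₁' x) x) (hR₁c : Continuous R₁')
    (hR₂d : ∀ x, HasDerivAt R₂ (R₂' x) x) (hR₂c : Continuous R₂')
    (hσ₁ : 0 < σ₁) (hσ₂ : 0 < σ₂)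
    (hR₁sc : ∀ x y : ℝ, R₁ y + R₁' y * (x - y) + σ₁ / 2 * (x - y) ^ 2 ≤ R₁ x)
    (hR₂sc : ∀ x y : ℝ, R₂ y + R₂' y * (x - y) + σ₂ / 2 * (x - y) ^ 2 ≤ R₂ x)
    -- s lies in S₁,ₘ ∩ S₂,ₘ ∩ Sₙ,ₘ
    (s : ℝ) (hs : 0 < s)
    (hf₁ : (4 * σ₁ + 2 * σ₂ / m ^ 2) * s ^ 2 -
      ((2 - 1 / (2 * m)) * σ₁ - σ₂ / (2 * m)) * s + 3 / 4 < 0)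
    (hf₂ : (4 * σ₂ + 2 * σ₁ / m ^ 2) * s ^ 2 -
      ((2 - 1 / (2 * m)) * σ₂ - σ₁ / (2 * m)) * s + 3 / 4 < 0)
    (hfn : (2 / m ^ 2) * (σ₁ + σ₂) * s ^ 2 +
      (1 / (2 * m)) * (σ₁ + σ₂) * s - 1 / 4 < 0)
    -- the OMD dynamics with constant step sizes εᵢₜ = s σᵢ (1 − a)/βᵢ
    (y₁ y₂ p₁ p₂ r : ℕ → ℝ)
    (hr0 : r 0 ∈ Set.Icc pl pu)
    (hp₁proj : ∀ t, p₁ t = min (max (y₁ t) pl) pu)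
    (hp₂proj : ∀ t, p₂ t = min (max (y₂ t) pl) pu)
    (hy₁ : ∀ t, R₁' (y₁ (t + 1)) = R₁' (p₁ t) -
      (s * σ₁ * (1 - a) / β₁) * (2 * β₁ * p₁ t - (α₁ + δ₁ * p₂ t + γ₁ * r t)))
    (hy₂ : ∀ t, R₂' (y₂ (t + 1)) = R₂' (p₂ t) -
      (s * σ₂ * (1 - a) / β₂) * (2 * β₂ * p₂ t - (α₂ + δ₂ * p₁ t + γ₂ * r t)))
    (hrupd : ∀ t, r (t + 1) = a * r t + (1 - a) * (θ₁ * p₁ t + θ₂ * p₂ t)) :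
    Filter.Tendsto p₁ Filter.atTop (nhds p₁s) ∧
    Filter.Tendsto p₂ Filter.atTop (nhds p₂s) ∧
    Filter.Tendsto r Filter.atTop (nhds rs) := by
  have ha1 : 0 < 1 - a := by linarith [ha.2]
  have hm0 : m ≠ 0 := by linarith
  set E : ℕ → ℝ := fun t => (p₁ t - p₁s) ^ 2 + (p₂ t - p₂s) ^ 2 + (r t - rs) ^ 2 with hEdef
  have hE : Filter.Tendsto E Filter.atTop (nhds 0) := by
    -- Any weight in `[1/4, 3/4]` for `(r - rs) ^ 2` works; `1/2` leaves slack `1/4` on both sides.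
    refine tendsto_zero_of_drop (κ := (1 - a) / 4)
      (V := fun t => bregman R₁ R₁' p₁s (p₁ t) + bregman R₂ R₂' p₂s (p₂ t)
        + (r t - rs) ^ 2 / 2) (by positivity) (fun t => ?_) (fun t => by positivity) (fun t => ?_)
    · have h1 := bregman_nonneg hσ₁ hR₁sc p₁s (p₁ t)
      have h2 := bregman_nonneg hσ₂ hR₂sc p₂s (p₂ t)
      positivity
    · have h1 := firm_step hσ₁ hR₁sc hδ₁ hγ₁ hm hβ₁ ha hs hp₁s hBR₁ (hy₁ t)
      have h2 := firm_step hσ₂ hR₂sc hδ₂ hγ₂ hm hβ₂ ha hs hp₂s hBR₂ (hy₂ t)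
      rw [← hp₁proj (t + 1)] at h1
      rw [← hp₂proj (t + 1)] at h2
      have h3 : (r (t + 1) - rs) ^ 2 ≤ (r t - rs) ^ 2 + (1 - a) *
          ((p₁ t - p₁s) ^ 2 + (p₂ t - p₂s) ^ 2 - (r t - rs) ^ 2) := by
        have hr : r (t + 1) - rs = a * (r t - rs)
            + (1 - a) * (θ₁ * (p₁ t - p₁s) + θ₂ * (p₂ t - p₂s)) := by
          rw [hrupd, hstab]
          ring
        rw [hr]
        generalize r t - rs = ρ
        generalize p₁ t - p₁s = x
        generalize p₂ t - p₂s = w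
        have e1 : 0 ≤ a * (1 - a) * (ρ - (θ₁ * x + θ₂ * w)) ^ 2 :=
          mul_nonneg (mul_nonneg ha.1.le ha1.le) (sq_nonneg _)
        have e2 : (θ₁ * x + θ₂ * w) ^ 2 ≤ x ^ 2 + w ^ 2 := by
          have e3 : 0 ≤ θ₁ * θ₂ * (x - w) ^ 2 :=
            mul_nonneg (mul_nonneg hθ₁.1.le hθ₂.1.le) (sq_nonneg _)
          have e4 := mul_le_mul_of_nonneg_right hθ₁.2.le (sq_nonneg x)
          have e5 := mul_le_mul_of_nonneg_right hθ₂.2.le (sq_nonneg w)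
          have e6 : (θ₁ * x + θ₂ * w) ^ 2
              = θ₁ * x ^ 2 + θ₂ * w ^ 2 - θ₁ * θ₂ * (x - w) ^ 2 := by
            obtain rfl : θ₂ = 1 - θ₁ := by linarith
            ring
          linarith
        have e7 := mul_le_mul_of_nonneg_left e2 ha1.le
        linarith
      have k1 : 1 / (2 * m) = 1 / m / 2 := by field_simp
      have k2 : ∀ c : ℝ, c / m ^ 2 = c * (1 / m) ^ 2 := fun c => by field_simp
      have k3 : ∀ c : ℝ, c / (2 * m) = c * (1 / m) / 2 := fun c => by field_simp
      rw [k2, k1, k3] at hf₁ hf₂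
      rw [k2, k1] at hfn
      generalize 1 / m = k at *
      have c1 := mul_nonneg (mul_nonneg ha1.le (sq_nonneg (p₁ t - p₁s))) (neg_nonneg.2 hf₁.le)
      have c2 := mul_nonneg (mul_nonneg ha1.le (sq_nonneg (p₂ t - p₂s))) (neg_nonneg.2 hf₂.le)
      have c3 := mul_nonneg (mul_nonneg ha1.le (sq_nonneg (r t - rs))) (neg_nonneg.2 hfn.le)
      simp only [hEdef]
      linarith
  refine ⟨tendsto_of_sq_le hE fun t => ?_, tendsto_of_sq_le hE fun t => ?_,
    tendsto_of_sq_le hE fun t => ?_⟩ <;> simp only [hEdef] <;>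
    linarith [sq_nonneg (p₁ t - p₁s), sq_nonneg (p₂ t - p₂s), sq_nonneg (r t - rs)]
end
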